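/- arXiv:1511.07579 — 9 statements merged into one kernel-verified Lean document; each statement's English description precedes it below -/
import Mathlib

section
/- For every x = (x₀, x₁, x₂, x₃) ∈ ℝ⁴, the 2×2 matrix γ(x) := [[0, σi·x₀·1 + x₁I + i·x₂J + x₃K], [−σi·x₀·1 + x₁I + i·x₂J + x₃K, 0]] with entries in ℍ^{𝒜_ℂ} satisfies γ(x)² = −(−x₀² + x₁² − x₂² + x₃²)·Id₂, i.e. γ is a Clifford map for the quadratic form of signature (2,2) on ℝ⁴. -/
noncomputable section

/-! ### The algebra `𝒜` of Lorentz (split-complex) numbers.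

We realize `𝒜` (the real algebra with basis `{1, σ}`, `σ² = 1`) in split coordinates:
`(x, y) : ℝ × ℝ` represents `u + σ v` with `x = u + v`, `y = u - v`.  Multiplication is then
componentwise, `1 = (1,1)`, and `σ = (1, -1)` satisfies `σ² = 1`. -/

abbrev LorentzA : Type := ℝ × ℝ

/-- The element `σ ∈ 𝒜`, with `σ² = 1`, `σ ∉ ℝ·1`. -/
def sA : LorentzA := (1, -1)

/-- The element `u + σ v` of `𝒜`. -/
def mkA (u v : ℝ) : LorentzA := (u + v, u - v)

/-- The inclusion `ℝ ⊆ 𝒜`, `t ↦ t·1`. -/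
def toA (t : ℝ) : LorentzA := (t, t)

/-- Conjugation of `𝒜`: `u + σ v ↦ u - σ v` (the swap, in split coordinates). -/
def conjA (a : LorentzA) : LorentzA := (a.2, a.1)

/-- `|a|² := a·â = u² - v²`, as a real number (so that `a * conjA a = toA (nsqA a)`). -/
def nsqA (a : LorentzA) : ℝ := a.1 * a.2

/-- The real part of `a = u + σ v ∈ 𝒜`, namely `u`. -/
def ReA (a : LorentzA) : ℝ := (a.1 + a.2) / 2

/-- The imaginary part of `a = u + σ v ∈ 𝒜`, namely `v`. -/
def ImA (a : LorentzA) : ℝ := (a.1 - a.2) / 2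

/-- The idempotent `(1 + σ)/2` of `𝒜`. -/
def eP : LorentzA := (1 + sA) / 2

/-- The idempotent `(1 - σ)/2` of `𝒜`. -/
def eM : LorentzA := (1 - sA) / 2

/-! ### Derivatives of maps `ℝ² → 𝒜` and `ℝ² → ℝ`. -/

/-- `∂_u f`. -/
def duA (f : ℝ × ℝ → LorentzA) (x : ℝ × ℝ) : LorentzA := fderiv ℝ f x (1, 0)

/-- `∂_v f`. -/
def dvA (f : ℝ × ℝ → LorentzA) (x : ℝ × ℝ) : LorentzA := fderiv ℝ f x (0, 1)

/-- `∂_a f = ½ (∂_u f + σ ∂_v f)`. -/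
def Da (f : ℝ × ℝ → LorentzA) (x : ℝ × ℝ) : LorentzA := ((2:ℝ)⁻¹) • (duA f x + sA * dvA f x)

/-- `∂_â f = ½ (∂_u f - σ ∂_v f)`.  A map is conformal iff `∂_â f = 0`. -/
def Dahat (f : ℝ × ℝ → LorentzA) (x : ℝ × ℝ) : LorentzA := ((2:ℝ)⁻¹) • (duA f x - sA * dvA f x)

/-- `∂_u f` for real-valued `f`. -/
def duR (f : ℝ × ℝ → ℝ) (x : ℝ × ℝ) : ℝ := fderiv ℝ f x (1, 0)

/-- `∂_v f` for real-valued `f`. -/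
def dvR (f : ℝ × ℝ → ℝ) (x : ℝ × ℝ) : ℝ := fderiv ℝ f x (0, 1)

/-- `∂²f/∂u²`. -/
def duuR (f : ℝ × ℝ → ℝ) (x : ℝ × ℝ) : ℝ := fderiv ℝ (fun y => fderiv ℝ f y (1, 0)) x (1, 0)

/-- `∂²f/∂v²`. -/
def dvvR (f : ℝ × ℝ → ℝ) (x : ℝ × ℝ) : ℝ := fderiv ℝ (fun y => fderiv ℝ f y (0, 1)) x (0, 1)

/-- The wave operator `□ f = -∂²f/∂u² + ∂²f/∂v²`. -/
def boxR (f : ℝ × ℝ → ℝ) (x : ℝ × ℝ) : ℝ := -duuR f x + dvvR f x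

/-! ### 2×2 matrices over `𝒜`. -/

abbrev M2A := Matrix (Fin 2) (Fin 2) LorentzA

/-- The conjugate transpose `B*` of `B ∈ M₂(𝒜)`. -/
def ctrans (B : M2A) : M2A := (B.map conjA).transpose

/-- `Herm₂(𝒜) = {B ∈ M₂(𝒜) : B = B*}`. -/
def Herm2 : Set M2A := {B | B = ctrans B}

/-- `SL₂(𝒜) = {B ∈ M₂(𝒜) : det B = 1}`. -/
def SL2A : Set M2A := {B | B.det = 1}

/-- The inclusion `M₂(ℝ) ⊆ M₂(𝒜)`. -/
def mR (C : Matrix (Fin 2) (Fin 2) ℝ) : M2A := C.map toA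

/-! ### The complexified Lorentz numbers `𝒜_ℂ = 𝒜 ⊗ ℂ ≅ ℂ × ℂ` (split coordinates),
and the quaternions `ℍ^{𝒜_ℂ}` with coefficients in `𝒜_ℂ`. -/

abbrev AC : Type := ℂ × ℂ

/-- `σ ∈ 𝒜_ℂ`. -/
def sC : AC := (1, -1)

/-- The complex unit `i ∈ 𝒜_ℂ`. -/
def iC : AC := (Complex.I, Complex.I)

/-- Conjugation `u + σ v ↦ u - σ v` (`u, v ∈ ℂ`) of `𝒜_ℂ`. -/
def hatC (z : AC) : AC := (z.2, z.1)

/-- The inclusion `ℝ ⊆ 𝒜_ℂ`. -/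
def rc (t : ℝ) : AC := ((t : ℂ), (t : ℂ))

/-- The inclusion `𝒜 ⊆ 𝒜_ℂ`. -/
def toAC (a : LorentzA) : AC := ((a.1 : ℂ), (a.2 : ℂ))

/-- `a ↦ i·a`, the image of `𝒜` in `i·𝒜 ⊆ 𝒜_ℂ`. -/
def iAC (a : LorentzA) : AC := (Complex.I * a.1, Complex.I * a.2)

/-- `ℍ^{𝒜_ℂ}`: quaternions `ζ₀·1 + ζ₁·I + ζ₂·J + ζ₃·K` with `ζᵢ ∈ 𝒜_ℂ`,
`I² = J² = K² = -1`, `IJ = -JI = K`. -/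
abbrev HAC := Quaternion AC

/-- The scalar quaternion `z·1`. -/
def qscalar (z : AC) : HAC := ⟨z, 0, 0, 0⟩

/-- The quaternion unit `I`. -/
def qI : HAC := ⟨0, 1, 0, 0⟩

/-- The quaternion unit `J`. -/
def qJ : HAC := ⟨0, 0, 1, 0⟩

/-- The quaternion unit `K`. -/
def qK : HAC := ⟨0, 0, 0, 1⟩

/-- `ζ̂`: apply `𝒜_ℂ`-conjugation to each coefficient of a quaternion.
(Quaternionic conjugation `ζ̄` is `star ζ`.) -/
def qhat (q : HAC) : HAC := ⟨hatC q.re, hatC q.imI, hatC q.imJ, hatC q.imK⟩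

/-- `H(ζ, ζ') = ½(ζ ζ̄' + ζ' ζ̄) = ζ₀ζ₀' + ζ₁ζ₁' + ζ₂ζ₂' + ζ₃ζ₃' ∈ 𝒜_ℂ`. -/
def Hform (q q' : HAC) : AC := q.re * q'.re + q.imI * q'.imI + q.imJ * q'.imJ + q.imK * q'.imK

/-- `p₀·1 + i p₁·I + p₂·J + i p₃·K` with `pᵢ ∈ 𝒜`: the generic element of `ℍ₀`. -/
def mk0 (p₀ p₁ p₂ p₃ : LorentzA) : HAC :=
  qscalar (toAC p₀) + qscalar (iAC p₁) * qI + qscalar (toAC p₂) * qJ + qscalar (iAC p₃) * qK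

/-- `i q₀·1 + q₁·I + i q₂·J + q₃·K` with `qᵢ ∈ 𝒜`: the generic element of `ℍ₁`. -/
def mk1 (q₀ q₁ q₂ q₃ : LorentzA) : HAC :=
  qscalar (iAC q₀) + qscalar (toAC q₁) * qI + qscalar (iAC q₂) * qJ + qscalar (toAC q₃) * qK

/-- `ℍ₀ = {p₀·1 + i p₁·I + p₂·J + i p₃·K : pᵢ ∈ 𝒜} ⊆ ℍ^{𝒜_ℂ}`. -/
def H0set : Set HAC := {ζ | ∃ p₀ p₁ p₂ p₃ : LorentzA, ζ = mk0 p₀ p₁ p₂ p₃}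

/-- `ℍ₁ = {i q₀·1 + q₁·I + i q₂·J + q₃·K : qᵢ ∈ 𝒜} ⊆ ℍ^{𝒜_ℂ}`. -/
def H1set : Set HAC := {ζ | ∃ q₀ q₁ q₂ q₃ : LorentzA, ζ = mk1 q₀ q₁ q₂ q₃}

/-- `Spin(2,2) = {p ∈ ℍ₀ : H(p,p) = 1}`. -/
def SpinSet : Set HAC := {p | p ∈ H0set ∧ Hform p p = 1}

/-- Extraction of the `𝒜`-coefficient of an element of `𝒜 ⊆ 𝒜_ℂ`. -/
def reEx (z : AC) : LorentzA := (z.1.re, z.2.re)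

/-- Extraction of the `𝒜`-coefficient of an element of `i·𝒜 ⊆ 𝒜_ℂ`. -/
def imEx (z : AC) : LorentzA := (z.1.im, z.2.im)

/-- The map `A₀ : ℍ₀ → M₂(𝒜)`,
`p₀·1 + i p₁·I + p₂·J + i p₃·K ↦ [[p₀ - σp₁, p₂ - σp₃], [-p₂ - σp₃, p₀ + σp₁]]`
(written via coefficient extraction, so that it is a total function on `ℍ^{𝒜_ℂ}`
agreeing with `A₀` on `ℍ₀`). -/
def A0 (ζ : HAC) : M2A :=
  !![reEx ζ.re - sA * imEx ζ.imI, reEx ζ.imJ - sA * imEx ζ.imK;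
     -reEx ζ.imJ - sA * imEx ζ.imK, reEx ζ.re + sA * imEx ζ.imI]

/-- The map `A₁ : ℍ₁ → M₂(𝒜)`,
`i q₀·1 + q₁·I + i q₂·J + q₃·K ↦ [[-q₁ - σq₀, -q₃ - σq₂], [-q₃ + σq₂, q₁ - σq₀]]`. -/
def A1 (ζ : HAC) : M2A :=
  !![-reEx ζ.imI - sA * imEx ζ.re, -reEx ζ.imK - sA * imEx ζ.imJ;
     -reEx ζ.imK + sA * imEx ζ.imJ, reEx ζ.imI - sA * imEx ζ.re]
/-- The quaternion `σi·x₀·1 + x₁·I + i·x₂·J + x₃·K ∈ ℍ^{𝒜_ℂ}`. -/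
def gammaV (x : Fin 4 → ℝ) : HAC :=
  qscalar (sC * iC * rc (x 0)) + qscalar (rc (x 1)) * qI + qscalar (iC * rc (x 2)) * qJ +
    qscalar (rc (x 3)) * qK

/-- The quaternion `-σi·x₀·1 + x₁·I + i·x₂·J + x₃·K ∈ ℍ^{𝒜_ℂ}`. -/
def gammaW (x : Fin 4 → ℝ) : HAC :=
  qscalar (-(sC * iC * rc (x 0))) + qscalar (rc (x 1)) * qI + qscalar (iC * rc (x 2)) * qJ +
    qscalar (rc (x 3)) * qK

/-- The Clifford map `γ : ℝ^{2,2} → M₂(ℍ^{𝒜_ℂ})`. -/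
def gammaMap (x : Fin 4 → ℝ) : Matrix (Fin 2) (Fin 2) HAC := !![0, gammaV x; gammaW x, 0]

theorem hone_re : QuaternionAlgebra.re (1 : HAC) = 1 := rfl
theorem hone_imI : QuaternionAlgebra.imI (1 : HAC) = 0 := rfl
theorem hone_imJ : QuaternionAlgebra.imJ (1 : HAC) = 0 := rfl
theorem hone_imK : QuaternionAlgebra.imK (1 : HAC) = 0 := rfl
theorem qscalar_re (z : AC) : (qscalar z).re = z := rfl
theorem qscalar_imI (z : AC) : (qscalar z).imI = 0 := rfl
theorem qscalar_imJ (z : AC) : (qscalar z).imJ = 0 := rfl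
theorem qscalar_imK (z : AC) : (qscalar z).imK = 0 := rfl
theorem qI_re : qI.re = 0 := rfl
theorem qI_imI : qI.imI = 1 := rfl
theorem qI_imJ : qI.imJ = 0 := rfl
theorem qI_imK : qI.imK = 0 := rfl
theorem qJ_re : qJ.re = 0 := rfl
theorem qJ_imI : qJ.imI = 0 := rfl
theorem qJ_imJ : qJ.imJ = 1 := rfl
theorem qJ_imK : qJ.imK = 0 := rfl
theorem qK_re : qK.re = 0 := rfl
theorem qK_imI : qK.imI = 0 := rfl
theorem qK_imJ : qK.imJ = 0 := rfl
theorem qK_imK : qK.imK = 1 := rfl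

theorem gammaV_mul_gammaW (x : Fin 4 → ℝ) :
    gammaV x * gammaW x =
      algebraMap ℝ HAC (-(-(x 0) ^ 2 + (x 1) ^ 2 - (x 2) ^ 2 + (x 3) ^ 2)) := by
  rw [Algebra.algebraMap_eq_smul_one]
  have hI := Complex.I_sq
  ext1 <;> apply Prod.ext <;>
    simp [gammaV, gammaW, sC, iC, rc, hone_re, hone_imI, hone_imJ, hone_imK,
      qscalar_re, qscalar_imI, qscalar_imJ, qscalar_imK, qI_re, qI_imI, qI_imJ, qI_imK,
      qJ_re, qJ_imI, qJ_imJ, qJ_imK, qK_re, qK_imI, qK_imJ, qK_imK] <;>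
    grind

theorem gammaW_mul_gammaV (x : Fin 4 → ℝ) :
    gammaW x * gammaV x =
      algebraMap ℝ HAC (-(-(x 0) ^ 2 + (x 1) ^ 2 - (x 2) ^ 2 + (x 3) ^ 2)) := by
  rw [Algebra.algebraMap_eq_smul_one]
  have hI := Complex.I_sq
  ext1 <;> apply Prod.ext <;>
    simp [gammaV, gammaW, sC, iC, rc, hone_re, hone_imI, hone_imJ, hone_imK,
      qscalar_re, qscalar_imI, qscalar_imJ, qscalar_imK, qI_re, qI_imI, qI_imJ, qI_imK,
      qJ_re, qJ_imI, qJ_imJ, qJ_imK, qK_re, qK_imI, qK_imJ, qK_imK] <;>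
    grind

/-- For every `x ∈ ℝ⁴`, `γ(x)² = -⟨x,x⟩·Id₂` where
`⟨x,x⟩ = -x₀² + x₁² - x₂² + x₃²`, i.e. `γ` is a Clifford map for the quadratic form of
signature `(2,2)` on `ℝ⁴`. -/
theorem stmt0 (x : Fin 4 → ℝ) :
    gammaMap x * gammaMap x =
      algebraMap ℝ (Matrix (Fin 2) (Fin 2) HAC)
        (-(-(x 0) ^ 2 + (x 1) ^ 2 - (x 2) ^ 2 + (x 3) ^ 2)) := by
  rw [Matrix.algebraMap_eq_diagonal]
  ext1 a b
  fin_cases a <;> fin_cases b <;>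
    simp [gammaMap, Matrix.mul_apply, Fin.sum_univ_two, gammaV_mul_gammaW, gammaW_mul_gammaV,
      -map_neg, -map_add, -map_sub, -neg_add_rev, -map_pow]
end
end

section
/- Let Q be the quadratic form Q(x) = x₀² − x₁² + x₂² − x₃² on ℝ⁴ and let γ(x) := [[0, σi·x₀·1 + x₁I + i·x₂J + x₃K], [−σi·x₀·1 + x₁I + i·x₂J + x₃K, 0]] ∈ M₂(ℍ^{𝒜_ℂ}), which satisfies γ(x)² = Q(x)·Id₂. The real algebra homomorphism Cl(Q) → M₂(ℍ^{𝒜_ℂ}) induced by γ via the universal property of the Clifford algebra is injective, and its image is the real subalgebra {[[p, q], [q̂, p̂]] : p ∈ ℍ₀, q ∈ ℍ₁}. -/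
noncomputable section

/-- The quadratic form `Q(x) = x₀² - x₁² + x₂² - x₃²` on `ℝ⁴`. -/
def Q22 : QuadraticForm ℝ (Fin 4 → ℝ) := QuadraticMap.weightedSumSquares ℝ ![1, -1, 1, -1]

set_option linter.unusedSimpArgs false

/-- Constructor for quaternions over `AC`. -/
def mkq (a b c d : AC) : HAC := ⟨a, b, c, d⟩

lemma mkq_inj {a b c d a' b' c' d' : AC} :
    mkq a b c d = mkq a' b' c' d' ↔ a = a' ∧ b = b' ∧ c = c' ∧ d = d' := by
  constructor
  · intro h
    exact ⟨congrArg (fun q : HAC => q.re) h, congrArg (fun q : HAC => q.imI) h,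
      congrArg (fun q : HAC => q.imJ) h, congrArg (fun q : HAC => q.imK) h⟩
  · rintro ⟨rfl, rfl, rfl, rfl⟩
    rfl

lemma mkq_add (a b c d a' b' c' d' : AC) :
    mkq a b c d + mkq a' b' c' d' = mkq (a + a') (b + b') (c + c') (d + d') := rfl

lemma mkq_smul (r : ℝ) (a b c d : AC) :
    r • mkq a b c d = mkq (r • a) (r • b) (r • c) (r • d) := rfl

lemma mkq_neg (a b c d : AC) : -mkq a b c d = mkq (-a) (-b) (-c) (-d) := rfl

lemma mkq_mul (a b c d a' b' c' d' : AC) :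
    mkq a b c d * mkq a' b' c' d' =
      mkq (a * a' - b * b' - c * c' - d * d') (a * b' + b * a' + c * d' - d * c')
        (a * c' - b * d' + c * a' + d * b') (a * d' + b * c' - c * b' + d * a') := by
  apply Quaternion.ext
  · exact Quaternion.re_mul _ _
  · exact Quaternion.imI_mul _ _
  · exact Quaternion.imJ_mul _ _
  · exact Quaternion.imK_mul _ _

lemma one_eq_mkq : (1 : HAC) = mkq 1 0 0 0 := rfl

lemma zero_eq_mkq : (0 : HAC) = mkq 0 0 0 0 := rfl

lemma qhat_mkq (a b c d : AC) :
    qhat (mkq a b c d) = mkq (hatC a) (hatC b) (hatC c) (hatC d) := rfl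

lemma qs_eq (z : AC) : qscalar z = mkq z 0 0 0 := rfl

lemma qI_eq : qI = mkq 0 1 0 0 := rfl

lemma qJ_eq : qJ = mkq 0 0 1 0 := rfl

lemma qK_eq : qK = mkq 0 0 0 1 := rfl

lemma mk0_eq (a b c d : LorentzA) : mk0 a b c d = mkq (toAC a) (iAC b) (toAC c) (iAC d) := by
  simp [mk0, qs_eq, qI_eq, qJ_eq, qK_eq, mkq_add, mkq_mul]

lemma mk1_eq (a b c d : LorentzA) : mk1 a b c d = mkq (iAC a) (toAC b) (iAC c) (toAC d) := by
  simp [mk1, qs_eq, qI_eq, qJ_eq, qK_eq, mkq_add, mkq_mul]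

lemma gammaV_eq (x : Fin 4 → ℝ) :
    gammaV x = mkq (sC * iC * rc (x 0)) (rc (x 1)) (iC * rc (x 2)) (rc (x 3)) := by
  simp [gammaV, qs_eq, qI_eq, qJ_eq, qK_eq, mkq_add, mkq_mul]

lemma gammaW_eq (x : Fin 4 → ℝ) :
    gammaW x = mkq (-(sC * iC * rc (x 0))) (rc (x 1)) (iC * rc (x 2)) (rc (x 3)) := by
  simp [gammaW, qs_eq, qI_eq, qJ_eq, qK_eq, mkq_add, mkq_mul]

lemma toAC_add (a b : LorentzA) : toAC (a + b) = toAC a + toAC b := by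
  simp [toAC]

lemma iAC_add (a b : LorentzA) : iAC (a + b) = iAC a + iAC b := by
  simp [iAC, mul_add]

lemma toAC_smul (r : ℝ) (b : LorentzA) : toAC (r • b) = r • toAC b := by
  simp [toAC]

lemma iAC_smul (r : ℝ) (b : LorentzA) : iAC (r • b) = r • iAC b := by
  simp [iAC, mul_left_comm]

lemma hatC_add (a b : AC) : hatC (a + b) = hatC a + hatC b := rfl

lemma hatC_smul (r : ℝ) (b : AC) : hatC (r • b) = r • hatC b := rfl

lemma toAC_inj {a b : LorentzA} (h : toAC a = toAC b) : a = b := by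
  simpa [toAC, Prod.ext_iff] using h

lemma iAC_inj {a b : LorentzA} (h : iAC a = iAC b) : a = b := by
  simpa [iAC, Prod.ext_iff] using h

/-- The quaternion `p` built from eight Lorentz numbers. -/
def psiP (x : Fin 8 → LorentzA) : HAC := mkq (toAC (x 0)) (iAC (x 1)) (toAC (x 2)) (iAC (x 3))

/-- The quaternion `q` built from eight Lorentz numbers. -/
def psiQ (x : Fin 8 → LorentzA) : HAC := mkq (iAC (x 4)) (toAC (x 5)) (iAC (x 6)) (toAC (x 7))

/-- The parametrization of the target subspace. -/
def psi : (Fin 8 → LorentzA) →ₗ[ℝ] Matrix (Fin 2) (Fin 2) HAC where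
  toFun x := !![psiP x, psiQ x; qhat (psiQ x), qhat (psiP x)]
  map_add' x y := by
    have hp : psiP (x + y) = psiP x + psiP y := by
      simp only [psiP, Pi.add_apply, toAC_add, iAC_add, mkq_add]
    have hq : psiQ (x + y) = psiQ x + psiQ y := by
      simp only [psiQ, Pi.add_apply, toAC_add, iAC_add, mkq_add]
    have hh : ∀ a b, qhat (a + b) = qhat a + qhat b := fun a b => rfl
    rw [hp, hq, hh, hh]
    ext1 i j
    fin_cases i <;> fin_cases j <;> rfl
  map_smul' r x := by
    have hp : psiP (r • x) = r • psiP x := by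
      simp only [psiP, Pi.smul_apply, toAC_smul, iAC_smul, mkq_smul]
    have hq : psiQ (r • x) = r • psiQ x := by
      simp only [psiQ, Pi.smul_apply, toAC_smul, iAC_smul, mkq_smul]
    have hh : ∀ a, qhat (r • a) = r • qhat a := fun a => rfl
    rw [hp, hq, hh, hh]
    ext1 i j
    fin_cases i <;> fin_cases j <;> rfl

lemma psi_apply (x : Fin 8 → LorentzA) :
    psi x = !![psiP x, psiQ x; qhat (psiQ x), qhat (psiP x)] := rfl

lemma psi_injective : Function.Injective psi := by
  intro x y h
  have hp : psiP x = psiP y := congrFun (congrFun h 0) 0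
  have hq : psiQ x = psiQ y := congrFun (congrFun h 0) 1
  simp only [psiP, psiQ, mkq_inj] at hp hq
  obtain ⟨h0, h1, h2, h3⟩ := hp
  obtain ⟨h4, h5, h6, h7⟩ := hq
  funext i
  fin_cases i
  · exact toAC_inj h0
  · exact iAC_inj h1
  · exact toAC_inj h2
  · exact iAC_inj h3
  · exact iAC_inj h4
  · exact toAC_inj h5
  · exact iAC_inj h6
  · exact toAC_inj h7

lemma finrank_range_psi : Module.finrank ℝ (LinearMap.range psi) = 16 := by
  rw [LinearMap.finrank_range_of_inj psi_injective]
  simp [Module.finrank_pi_fintype]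

lemma range_psi : (LinearMap.range psi : Set (Matrix (Fin 2) (Fin 2) HAC)) =
    {M | ∃ p ∈ H0set, ∃ q ∈ H1set, M = !![p, q; qhat q, qhat p]} := by
  ext M
  constructor
  · rintro ⟨x, rfl⟩
    exact ⟨psiP x, ⟨x 0, x 1, x 2, x 3, (mk0_eq _ _ _ _).symm⟩,
      psiQ x, ⟨x 4, x 5, x 6, x 7, (mk1_eq _ _ _ _).symm⟩, rfl⟩
  · rintro ⟨p, ⟨a, b, c, d, rfl⟩, q, ⟨a', b', c', d', rfl⟩, rfl⟩
    refine ⟨![a, b, c, d, a', b', c', d'], ?_⟩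
    rw [psi_apply, mk0_eq, mk1_eq]
    rfl

lemma finrank_cl : Module.finrank ℝ (CliffordAlgebra Q22) = 16 := by
  rw [(CliffordAlgebra.equivExterior Q22).finrank_eq,
    Module.finrank_eq_card_basis (Pi.basisFun ℝ (Fin 4)).ExteriorAlgebra]
  simp

instance finite_cl : Module.Finite ℝ (CliffordAlgebra Q22) :=
  Module.finite_of_finrank_pos (by rw [finrank_cl]; norm_num)

/-- The value `γ(e_i)`. -/
def gam (i : Fin 4) : Matrix (Fin 2) (Fin 2) HAC := gammaMap (Pi.single i 1)

lemma gam0 : gam 0 = !![0, mkq (sC * iC) 0 0 0; mkq (-(sC * iC)) 0 0 0, 0] := by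
  simp [gam, gammaMap, gammaV_eq, gammaW_eq, rc]
  simp [← Prod.zero_eq_mk, ← Prod.one_eq_mk]

lemma gam1 : gam 1 = !![0, mkq 0 1 0 0; mkq 0 1 0 0, 0] := by
  simp [gam, gammaMap, gammaV_eq, gammaW_eq, rc]
  simp [← Prod.zero_eq_mk, ← Prod.one_eq_mk]

lemma gam2 : gam 2 = !![0, mkq 0 0 iC 0; mkq 0 0 iC 0, 0] := by
  simp [gam, gammaMap, gammaV_eq, gammaW_eq, rc]
  simp [← Prod.zero_eq_mk, ← Prod.one_eq_mk]

lemma gam3 : gam 3 = !![0, mkq 0 0 0 1; mkq 0 0 0 1, 0] := by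
  simp [gam, gammaMap, gammaV_eq, gammaW_eq, rc]
  simp [← Prod.zero_eq_mk, ← Prod.one_eq_mk]

lemma anti_mul (a b c d : HAC) :
    !![0, a; b, 0] * !![0, c; d, 0] = !![a * d, 0; 0, b * c] := by
  simp

lemma diag_mul (a b c d : HAC) :
    !![a, 0; 0, b] * !![0, c; d, 0] = !![0, a * c; b * d, 0] := by
  simp

lemma iC_sq : iC * iC = -1 := by ext1 <;> simp [iC]

lemma sC_sq : sC * sC = 1 := by ext1 <;> simp [sC]

lemma g23 : gam 2 * gam 3 = !![mkq 0 iC 0 0, 0; 0, mkq 0 iC 0 0] := by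
  rw [gam2, gam3, anti_mul]; simp [mkq_mul, mul_assoc, iC_sq]

lemma g01 : gam 0 * gam 1 = !![mkq 0 (sC * iC) 0 0, 0; 0, mkq 0 (-(sC * iC)) 0 0] := by
  rw [gam0, gam1, anti_mul]; simp [mkq_mul, mul_assoc, iC_sq]

lemma g13 : gam 1 * gam 3 = !![mkq 0 0 (-1) 0, 0; 0, mkq 0 0 (-1) 0] := by
  rw [gam1, gam3, anti_mul]; simp [mkq_mul, mul_assoc, iC_sq]

lemma g02 : gam 0 * gam 2 = !![mkq 0 0 (-sC) 0, 0; 0, mkq 0 0 sC 0] := by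
  rw [gam0, gam2, anti_mul]; simp [mkq_mul, mul_assoc, iC_sq]

lemma g12 : gam 1 * gam 2 = !![mkq 0 0 0 iC, 0; 0, mkq 0 0 0 iC] := by
  rw [gam1, gam2, anti_mul]; simp [mkq_mul, mul_assoc, iC_sq]

lemma g03 : gam 0 * gam 3 = !![mkq 0 0 0 (sC * iC), 0; 0, mkq 0 0 0 (-(sC * iC))] := by
  rw [gam0, gam3, anti_mul]; simp [mkq_mul, mul_assoc, iC_sq]

lemma g123 : gam 1 * gam 2 * gam 3 = !![0, mkq (-iC) 0 0 0; mkq (-iC) 0 0 0, 0] := by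
  rw [g12, gam3, diag_mul]; simp [mkq_mul, mul_assoc, iC_sq]

lemma gT : gam 0 * (gam 1 * gam 2 * gam 3) = !![mkq sC 0 0 0, 0; 0, mkq (-sC) 0 0 0] := by
  rw [g123, gam0, anti_mul]; simp [mkq_mul, mul_assoc, iC_sq]

lemma gT1 : gam 0 * (gam 1 * gam 2 * gam 3) * gam 1 =
    !![0, mkq 0 sC 0 0; mkq 0 (-sC) 0 0, 0] := by
  rw [gT, gam1, diag_mul]; simp [mkq_mul, mul_assoc, iC_sq]

lemma gT2 : gam 0 * (gam 1 * gam 2 * gam 3) * gam 2 =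
    !![0, mkq 0 0 (sC * iC) 0; mkq 0 0 (-(sC * iC)) 0, 0] := by
  rw [gT, gam2, diag_mul]; simp [mkq_mul, mul_assoc, iC_sq]

lemma gT3 : gam 0 * (gam 1 * gam 2 * gam 3) * gam 3 =
    !![0, mkq 0 0 0 sC; mkq 0 0 0 (-sC), 0] := by
  rw [gT, gam3, diag_mul]; simp [mkq_mul, mul_assoc, iC_sq]

lemma psi_eq (x : Fin 8 → LorentzA) : psi x =
    ReA (x 0) • (1 : Matrix (Fin 2) (Fin 2) HAC)
    + ImA (x 0) • (gam 0 * (gam 1 * gam 2 * gam 3))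
    + ReA (x 1) • (gam 2 * gam 3) + ImA (x 1) • (gam 0 * gam 1)
    + (-ReA (x 2)) • (gam 1 * gam 3) + (-ImA (x 2)) • (gam 0 * gam 2)
    + ReA (x 3) • (gam 1 * gam 2) + ImA (x 3) • (gam 0 * gam 3)
    + (-ReA (x 4)) • (gam 1 * gam 2 * gam 3) + ImA (x 4) • gam 0
    + ReA (x 5) • gam 1 + ImA (x 5) • (gam 0 * (gam 1 * gam 2 * gam 3) * gam 1)
    + ReA (x 6) • gam 2 + ImA (x 6) • (gam 0 * (gam 1 * gam 2 * gam 3) * gam 2)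
    + ReA (x 7) • gam 3 + ImA (x 7) • (gam 0 * (gam 1 * gam 2 * gam 3) * gam 3) := by
  rw [gT1, gT2, gT3, gT, g123, g23, g01, g13, g02, g12, g03, gam0, gam1, gam2, gam3, psi_apply]
  ext1 i j
  fin_cases i <;> fin_cases j <;>
    simp [psiP, psiQ, qhat_mkq, one_eq_mkq, zero_eq_mkq, mkq_add, mkq_smul, mkq_neg] <;>
    refine mkq_inj.2 ⟨?_, ?_, ?_, ?_⟩ <;>
    ext1 <;> simp [hatC, toAC, iAC, sC, iC, ReA, ImA] <;> ring

lemma psi_mem (S : Subalgebra ℝ (Matrix (Fin 2) (Fin 2) HAC)) (h : ∀ i, gam i ∈ S)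
    (x : Fin 8 → LorentzA) : psi x ∈ S := by
  rw [psi_eq]
  have h0 := h 0
  have h1 := h 1
  have h2 := h 2
  have h3 := h 3
  have hT := S.mul_mem h0 (S.mul_mem (S.mul_mem h1 h2) h3)
  repeat' apply S.add_mem
  all_goals apply S.smul_mem
  all_goals first
    | exact S.one_mem
    | assumption
    | exact S.mul_mem (by assumption) (by assumption)
    | exact S.mul_mem (S.mul_mem (by assumption) (by assumption)) (by assumption)

/-- The real algebra homomorphism `Cl(Q) → M₂(ℍ^{𝒜_ℂ})` induced by `γ` via
the universal property of the Clifford algebra (i.e. the algebra map `f` with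
`f (ι x) = γ(x)` for all `x`) is injective, and its image is the real subalgebra
`{[[p, q], [q̂, p̂]] : p ∈ ℍ₀, q ∈ ℍ₁}`. -/
theorem stmt1 (f : CliffordAlgebra Q22 →ₐ[ℝ] Matrix (Fin 2) (Fin 2) HAC)
    (hf : ∀ x, f (CliffordAlgebra.ι Q22 x) = gammaMap x) :
    Function.Injective ⇑f ∧
      Set.range ⇑f =
        {M : Matrix (Fin 2) (Fin 2) HAC |
          ∃ p ∈ H0set, ∃ q ∈ H1set, M = !![p, q; qhat q, qhat p]} := by
  have hle : LinearMap.range psi ≤ LinearMap.range f.toLinearMap := by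
    rintro _ ⟨x, rfl⟩
    exact psi_mem f.range (fun i => ⟨CliffordAlgebra.ι Q22 (Pi.single i 1), hf _⟩) x
  have hrn := LinearMap.finrank_range_add_finrank_ker f.toLinearMap
  rw [finrank_cl] at hrn
  have h16 := Submodule.finrank_mono hle
  rw [finrank_range_psi] at h16
  have heq : LinearMap.range psi = LinearMap.range f.toLinearMap :=
    Submodule.eq_of_le_of_finrank_le hle (by rw [finrank_range_psi]; omega)
  refine ⟨?_, ?_⟩
  · have hk : LinearMap.ker f.toLinearMap = ⊥ := Submodule.finrank_eq_zero.mp (by omega)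
    exact LinearMap.ker_eq_bot.mp hk
  · rw [← range_psi, heq]
    rfl
end
end

section
/- The map A₀ restricts to a group isomorphism from Spin(2,2) := {p ∈ ℍ₀ : H(p,p) = 1} onto SL₂(𝒜) := {B ∈ M₂(𝒜) : det B = 1}. -/
noncomputable section

theorem qI_re_s3 : (qI).re = 0 := rfl
theorem qI_imI_s3 : (qI).imI = 1 := rfl
theorem qI_imJ_s3 : (qI).imJ = 0 := rfl
theorem qI_imK_s3 : (qI).imK = 0 := rfl
theorem qJ_re_s3 : (qJ).re = 0 := rfl
theorem qJ_imI_s3 : (qJ).imI = 0 := rfl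
theorem qJ_imJ_s3 : (qJ).imJ = 1 := rfl
theorem qJ_imK_s3 : (qJ).imK = 0 := rfl
theorem qK_re_s3 : (qK).re = 0 := rfl
theorem qK_imI_s3 : (qK).imI = 0 := rfl
theorem qK_imJ_s3 : (qK).imJ = 0 := rfl
theorem qK_imK_s3 : (qK).imK = 1 := rfl

theorem mk0_re (a b c d : LorentzA) : (mk0 a b c d).re = toAC a := by
  simp [mk0, qscalar_re, qscalar_imI, qscalar_imJ, qscalar_imK, qI_re_s3, qI_imI_s3, qI_imJ_s3, qI_imK_s3
    , qJ_re_s3, qJ_imI_s3, qJ_imJ_s3, qJ_imK_s3, qK_re_s3, qK_imI_s3, qK_imJ_s3, qK_imK_s3]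

theorem mk0_imI (a b c d : LorentzA) : (mk0 a b c d).imI = iAC b := by
  simp [mk0, qscalar_re, qscalar_imI, qscalar_imJ, qscalar_imK, qI_re_s3, qI_imI_s3, qI_imJ_s3, qI_imK_s3
    , qJ_re_s3, qJ_imI_s3, qJ_imJ_s3, qJ_imK_s3, qK_re_s3, qK_imI_s3, qK_imJ_s3, qK_imK_s3]

theorem mk0_imJ (a b c d : LorentzA) : (mk0 a b c d).imJ = toAC c := by
  simp [mk0, qscalar_re, qscalar_imI, qscalar_imJ, qscalar_imK, qI_re_s3, qI_imI_s3, qI_imJ_s3, qI_imK_s3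
    , qJ_re_s3, qJ_imI_s3, qJ_imJ_s3, qJ_imK_s3, qK_re_s3, qK_imI_s3, qK_imJ_s3, qK_imK_s3]

theorem mk0_imK (a b c d : LorentzA) : (mk0 a b c d).imK = iAC d := by
  simp [mk0, qscalar_re, qscalar_imI, qscalar_imJ, qscalar_imK, qI_re_s3, qI_imI_s3, qI_imJ_s3, qI_imK_s3
    , qJ_re_s3, qJ_imI_s3, qJ_imJ_s3, qJ_imK_s3, qK_re_s3, qK_imI_s3, qK_imJ_s3, qK_imK_s3]

theorem A0_mk0 (a b c d : LorentzA) :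
    A0 (mk0 a b c d) = !![a - sA * b, c - sA * d; -c - sA * d, a + sA * b] := by
  simp [A0, mk0_re, mk0_imI, mk0_imJ, mk0_imK, reEx, imEx, toAC, iAC]

theorem Hform_mk0 (a b c d : LorentzA) :
    Hform (mk0 a b c d) (mk0 a b c d) = toAC (a * a - b * b + c * c - d * d) := by
  ext <;> simp [Hform, mk0_re, mk0_imI, mk0_imJ, mk0_imK, toAC, iAC] <;> ring_nf <;>
    simp only [Complex.I_sq] <;> ring

theorem sA_sq : sA * sA = 1 := by
  ext <;> simp [sA]

theorem det_A0_mk0 (a b c d : LorentzA) :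
    (A0 (mk0 a b c d)).det = a * a - b * b + c * c - d * d := by
  rw [A0_mk0, Matrix.det_fin_two_of]
  linear_combination (-(b * b) - d * d) * sA_sq

theorem toAC_eq_one (a : LorentzA) : toAC a = 1 ↔ a = 1 := by
  simp [toAC, Prod.ext_iff]

theorem mem_Spin_mk0 (a b c d : LorentzA) :
    mk0 a b c d ∈ SpinSet ↔ A0 (mk0 a b c d) ∈ SL2A := by
  unfold SpinSet SL2A
  simp only [Set.mem_ofPred_eq, Hform_mk0, det_A0_mk0, toAC_eq_one]
  exact ⟨fun h => h.2, fun h => ⟨⟨a, b, c, d, rfl⟩, h⟩⟩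

theorem mk0_mul (a b c d a₂ b₂ c₂ d₂ : LorentzA) :
    mk0 a b c d * mk0 a₂ b₂ c₂ d₂ =
      mk0 (a * a₂ + b * b₂ - c * c₂ + d * d₂) (a * b₂ + b * a₂ + c * d₂ - d * c₂)
        (a * c₂ + b * d₂ + c * a₂ - d * b₂) (a * d₂ + b * c₂ - c * b₂ + d * a₂) := by
  ext <;> simp [mk0_re, mk0_imI, mk0_imJ, mk0_imK, toAC, iAC] <;> ring_nf <;>
    (try simp only [Complex.I_sq]) <;> (try ring)

/-- The map `A₀` restricts to a group isomorphism from
`Spin(2,2) = {p ∈ ℍ₀ : H(p,p) = 1}` onto `SL₂(𝒜) = {B ∈ M₂(𝒜) : det B = 1}`: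
it is a bijection between the two sets and is multiplicative on `Spin(2,2)`. -/
theorem stmt3 :
    Set.BijOn A0 SpinSet SL2A ∧
    ∀ p ∈ SpinSet, ∀ q ∈ SpinSet, A0 (p * q) = A0 p * A0 q := by
  refine ⟨⟨?_, ?_, ?_⟩, ?_⟩
  · rintro _ ⟨⟨a, b, c, d, rfl⟩, h⟩
    exact (mem_Spin_mk0 a b c d).1 ⟨⟨a, b, c, d, rfl⟩, h⟩
  · rintro _ ⟨⟨a, b, c, d, rfl⟩, -⟩ _ ⟨⟨a₂, b₂, c₂, d₂, rfl⟩, -⟩ h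
    rw [A0_mk0, A0_mk0] at h
    have h00 := congrFun (congrFun h 0) 0
    have h01 := congrFun (congrFun h 0) 1
    have h10 := congrFun (congrFun h 1) 0
    have h11 := congrFun (congrFun h 1) 1
    simp [Prod.ext_iff, sA] at h00 h01 h10 h11
    have ha : a = a₂ := by ext <;> linarith
    have hb : b = b₂ := by ext <;> linarith
    have hc : c = c₂ := by ext <;> linarith
    have hd : d = d₂ := by ext <;> linarith
    rw [ha, hb, hc, hd]
  · intro B hB
    have key : A0 (mk0 ((2:ℝ)⁻¹ • (B 0 0 + B 1 1)) ((2:ℝ)⁻¹ • (sA * (B 1 1 - B 0 0)))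
        ((2:ℝ)⁻¹ • (B 0 1 - B 1 0)) ((2:ℝ)⁻¹ • (-(sA * (B 0 1 + B 1 0))))) = B := by
      rw [A0_mk0]
      ext i j <;> fin_cases i <;> fin_cases j <;> simp [sA] <;> ring
    refine ⟨_, ?_, key⟩
    rw [mem_Spin_mk0, key]
    exact hB
  · rintro _ ⟨⟨a, b, c, d, rfl⟩, -⟩ _ ⟨⟨a₂, b₂, c₂, d₂, rfl⟩, -⟩
    rw [mk0_mul, A0_mk0, A0_mk0, A0_mk0, Matrix.mul_fin_two]
    congr 1
    ext i j <;> fin_cases i <;> fin_cases j <;> simp [sA] <;> ring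
end
end

section
/- The real-linear map A₁ : ℍ₁ → M₂(𝒜) sending q = iq₀1 + q₁I + iq₂J + q₃K (q₀,…,q₃ ∈ 𝒜) to the matrix [[−q₁ − σq₀, −q₃ − σq₂], [−q₃ + σq₂, q₁ − σq₀]] is a linear isomorphism, and for every q ∈ ℍ₁ one has H(q, q) = −det A₁(q) and A₁(\widehat{q̄}) = −A₁(q)*. -/
noncomputable section

/-- `A₁ : ℍ₁ → M₂(𝒜)`,
`iq₀·1 + q₁·I + iq₂·J + q₃·K ↦ [[-q₁ - σq₀, -q₃ - σq₂], [-q₃ + σq₂, q₁ - σq₀]]`,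
is a real-linear isomorphism, and for every `q ∈ ℍ₁` one has `H(q,q) = -det A₁(q)` and
`A₁(hat (q̄)) = -A₁(q)*`. -/
theorem stmt4 :
    (∀ q₀ q₁ q₂ q₃ : LorentzA, A1 (mk1 q₀ q₁ q₂ q₃) =
      !![-q₁ - sA * q₀, -q₃ - sA * q₂; -q₃ + sA * q₂, q₁ - sA * q₀]) ∧
    (∀ p ∈ H1set, ∀ q ∈ H1set, A1 (p + q) = A1 p + A1 q) ∧
    (∀ (r : ℝ), ∀ q ∈ H1set, A1 (r • q) = r • A1 q) ∧
    Set.BijOn A1 H1set Set.univ ∧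
    (∀ q ∈ H1set, Hform q q = toAC (-(A1 q).det) ∧ A1 (qhat (star q)) = -ctrans (A1 q)) := by
  have hre : ∀ q₀ q₁ q₂ q₃ : LorentzA, mk1 q₀ q₁ q₂ q₃ =
      ⟨iAC q₀, toAC q₁, iAC q₂, toAC q₃⟩ := by
    intro q₀ q₁ q₂ q₃
    have s1 : ∀ z, (qscalar z).re = z := fun _ => rfl
    have s2 : ∀ z, (qscalar z).imI = 0 := fun _ => rfl
    have s3 : ∀ z, (qscalar z).imJ = 0 := fun _ => rfl
    have s4 : ∀ z, (qscalar z).imK = 0 := fun _ => rfl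
    have i1 : qI.re = 0 := rfl
    have i2 : qI.imI = 1 := rfl
    have i3 : qI.imJ = 0 := rfl
    have i4 : qI.imK = 0 := rfl
    have j1 : qJ.re = 0 := rfl
    have j2 : qJ.imI = 0 := rfl
    have j3 : qJ.imJ = 1 := rfl
    have j4 : qJ.imK = 0 := rfl
    have k1 : qK.re = 0 := rfl
    have k2 : qK.imI = 0 := rfl
    have k3 : qK.imJ = 0 := rfl
    have k4 : qK.imK = 1 := rfl
    apply QuaternionAlgebra.ext <;>
      simp [mk1, s1, s2, s3, s4, i1, i2, i3, i4, j1, j2, j3, j4, k1, k2, k3, k4]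
  have h1 : ∀ q₀ q₁ q₂ q₃ : LorentzA, A1 (mk1 q₀ q₁ q₂ q₃) =
      !![-q₁ - sA * q₀, -q₃ - sA * q₂; -q₃ + sA * q₂, q₁ - sA * q₀] := by
    intro q₀ q₁ q₂ q₃
    rw [hre]
    simp [A1, reEx, imEx, iAC, toAC]
  refine ⟨h1, ?_, ?_, ⟨fun _ _ => Set.mem_univ _, ?_, ?_⟩, ?_⟩
  · rintro p - q -
    ext i j <;> fin_cases i <;> fin_cases j <;> simp [A1, reEx, imEx, sA] <;> ring
  · rintro r q -
    ext i j <;> fin_cases i <;> fin_cases j <;> simp [A1, reEx, imEx, sA] <;> ring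
  · rintro _ ⟨p₀, p₁, p₂, p₃, rfl⟩ _ ⟨q₀, q₁, q₂, q₃, rfl⟩ h
    rw [h1, h1] at h
    have a := congrFun (congrFun h 0) 0
    have b := congrFun (congrFun h 0) 1
    have c := congrFun (congrFun h 1) 0
    have d := congrFun (congrFun h 1) 1
    simp [sA, Prod.ext_iff] at a b c d
    obtain ⟨a1, a2⟩ := a
    obtain ⟨b1, b2⟩ := b
    obtain ⟨c1, c2⟩ := c
    obtain ⟨d1, d2⟩ := d
    have e0 : p₀ = q₀ := by ext <;> linarith
    have e1 : p₁ = q₁ := by ext <;> linarith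
    have e2 : p₂ = q₂ := by ext <;> linarith
    have e3 : p₃ = q₃ := by ext <;> linarith
    rw [e0, e1, e2, e3]
  · intro B _
    refine ⟨mk1 (-((2:ℝ)⁻¹ • (sA * (B 0 0 + B 1 1)))) ((2:ℝ)⁻¹ • (B 1 1 - B 0 0))
      ((2:ℝ)⁻¹ • (sA * (B 1 0 - B 0 1))) (-((2:ℝ)⁻¹ • (B 0 1 + B 1 0))), ⟨_, _, _, _, rfl⟩, ?_⟩
    rw [h1]
    ext i j <;> fin_cases i <;> fin_cases j <;> simp [sA] <;> ring
  · rintro _ ⟨q₀, q₁, q₂, q₃, rfl⟩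
    constructor
    · rw [h1, hre, Matrix.det_fin_two]
      have hI := Complex.I_mul_I
      ext1
      · simp [Hform, toAC, iAC, sA]
        linear_combination ((q₀.1:ℂ)^2 + (q₂.1:ℂ)^2) * hI
      · simp [Hform, toAC, iAC, sA]
        linear_combination ((q₀.2:ℂ)^2 + (q₂.2:ℂ)^2) * hI
    · generalize mk1 q₀ q₁ q₂ q₃ = q at *
      ext i j <;> fin_cases i <;> fin_cases j <;>
        simp [A1, ctrans, conjA, qhat, hatC, reEx, imEx, sA] <;> ring
end
end

section
/- The set {C ∈ Herm₂(𝒜) : det C = 1} equals {B·B* : B ∈ SL₂(𝒜)}. (Under the identification of ℝ^{2,2} with (Herm₂(𝒜), −det), this set is the Anti-de Sitter space ℍ^{2,1} = {x : ⟨x,x⟩ = −1}.) -/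
noncomputable section

/-- `{C ∈ Herm₂(𝒜) : det C = 1} = {B·B* : B ∈ SL₂(𝒜)}`
(the Anti-de Sitter space `ℍ^{2,1}` under the identification `ℝ^{2,2} ≅ (Herm₂(𝒜), -det)`). -/
theorem stmt7 :
    {C : M2A | C ∈ Herm2 ∧ C.det = 1} = {M : M2A | ∃ B ∈ SL2A, M = B * ctrans B} := by
  ext C
  simp only [Set.mem_setOf_eq, Herm2, SL2A]
  constructor
  · rintro ⟨h, hd⟩
    refine ⟨!![((C 0 0).1, 1), ((C 0 1).1, 0); ((C 1 0).1, 0), ((C 1 1).1, 1)], ?_, ?_⟩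
    · rw [Matrix.det_fin_two] at hd ⊢
      have h1 := congrArg Prod.fst hd
      ext
      · simpa using h1
      · simp
    · have h2 : ∀ i j, (C i j).2 = (C j i).1 := fun i j =>
        congrArg Prod.snd (congrFun (congrFun h i) j)
      ext i j <;> fin_cases i <;> fin_cases j <;>
        simp [ctrans, conjA, Matrix.mul_apply, Fin.sum_univ_two, h2]
  · rintro ⟨B, hB, rfl⟩
    rw [Matrix.det_fin_two] at hB
    have h1 := congrArg Prod.fst hB
    have h2 := congrArg Prod.snd hB
    simp at h1 h2
    constructor
    · ext i j <;>
        simp [ctrans, conjA, Matrix.mul_apply, Fin.sum_univ_two] <;> ring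
    · rw [Matrix.det_mul, Matrix.det_fin_two, Matrix.det_fin_two]
      ext
      · simp [ctrans, conjA]
        rw [h1]
        linarith
      · simp [ctrans, conjA]
        rw [h2]
        linarith
end
end

section
/- The set {C ∈ Herm₂(𝒜) : det C = −1} equals {B·diag(−1, 1)·B* : B ∈ SL₂(𝒜)}. (Under the identification of ℝ^{2,2} with (Herm₂(𝒜), −det), this set is the pseudo-sphere 𝕊^{1,2} = {x : ⟨x,x⟩ = 1}.) -/
noncomputable section

/-- `{C ∈ Herm₂(𝒜) : det C = -1} = {B·diag(-1,1)·B* : B ∈ SL₂(𝒜)}`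
(the pseudo-sphere `𝕊^{1,2}` under the identification `ℝ^{2,2} ≅ (Herm₂(𝒜), -det)`). -/
theorem stmt8 :
    {C : M2A | C ∈ Herm2 ∧ C.det = -1} =
      {M : M2A | ∃ B ∈ SL2A, M = B * !![(-1 : LorentzA), 0; 0, 1] * ctrans B} := by
  ext C
  simp only [Set.mem_setOf_eq, Herm2, SL2A]
  constructor
  · rintro ⟨h, hd⟩
    have h00 := congrFun (congrFun h 0) 0
    have h01 := congrFun (congrFun h 0) 1
    have h10 := congrFun (congrFun h 1) 0
    have h11 := congrFun (congrFun h 1) 1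
    simp only [ctrans, conjA, Matrix.transpose_apply, Matrix.map_apply, Prod.ext_iff]
      at h00 h01 h10 h11
    simp only [Matrix.det_fin_two, Prod.ext_iff, Prod.fst_sub, Prod.snd_sub, Prod.fst_mul,
      Prod.snd_mul, Prod.fst_neg, Prod.snd_neg, Prod.fst_one, Prod.snd_one] at hd
    refine ⟨!![(-(C 0 0).1, 1), ((C 0 1).1, 0); (-(C 1 0).1, 0), ((C 1 1).1, 1)], ?_, ?_⟩
    · rw [Matrix.det_fin_two]
      ext
      · simp
        linarith [hd.1]
      · simp
    · ext i j <;> fin_cases i <;> fin_cases j <;>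
        simp [ctrans, conjA, Matrix.mul_apply, Fin.sum_univ_two] <;>
        first
          | exact h00.2 | exact h01.2 | exact h10.2 | exact h11.2
  · rintro ⟨B, hB, rfl⟩
    constructor
    · ext i j <;> fin_cases i <;> fin_cases j <;>
        simp [ctrans, conjA, Matrix.mul_apply, Fin.sum_univ_two] <;> ring
    · have hc : (ctrans B).det = 1 := by
        rw [Matrix.det_fin_two] at hB ⊢
        simp only [Prod.ext_iff, Prod.fst_sub, Prod.snd_sub, Prod.fst_mul,
          Prod.snd_mul, Prod.fst_one, Prod.snd_one] at hB
        ext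
        · simp [ctrans, conjA]
          linarith [hB.2]
        · simp [ctrans, conjA]
          linarith [hB.1]
      rw [Matrix.det_mul, Matrix.det_mul, hB, hc]
      simp [Matrix.det_fin_two]
end
end

section
/- For every C ∈ Herm₂(𝒜) there exists a unique C₁ ∈ M₂(ℝ) such that C = ((1+σ)/2)·C₁ + ((1−σ)/2)·C₁ᵗ, and moreover det C = det C₁ (viewed in ℝ ⊂ 𝒜). Consequently, the map C ↦ C₁ is a bijection from Herm₂(𝒜) onto M₂(ℝ) which restricts to a bijection from {C ∈ Herm₂(𝒜) : det C = 1} onto SL₂(ℝ). -/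
noncomputable section

/-- `C₁ ↦ ((1+σ)/2)·C₁ + ((1-σ)/2)·C₁ᵗ`, from `M₂(ℝ)` to `M₂(𝒜)`. -/
def decompM (C₁ : Matrix (Fin 2) (Fin 2) ℝ) : M2A := eP • mR C₁ + eM • mR C₁.transpose

theorem eP_eq : eP = (1, 0) := by
  ext <;> norm_num [eP, sA]

theorem eM_eq : eM = (0, 1) := by
  ext <;> norm_num [eM, sA]

theorem decompM_apply (C : Matrix (Fin 2) (Fin 2) ℝ) (i j : Fin 2) :
    decompM C i j = (C i j, C j i) := by
  ext <;> simp [decompM, eP_eq, eM_eq, mR, toA]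

theorem decompM_mem (C : Matrix (Fin 2) (Fin 2) ℝ) : decompM C ∈ Herm2 := by
  show decompM C = ctrans (decompM C)
  ext i j <;> simp [ctrans, conjA, decompM_apply]

theorem decompM_inj : Function.Injective decompM := by
  intro C D h
  ext i j
  have h1 := congrArg Prod.fst (congrFun (congrFun h i) j)
  simpa [decompM_apply] using h1

theorem decompM_surj (C : M2A) (hC : C ∈ Herm2) : decompM (C.map Prod.fst) = C := by
  have hC' : C = ctrans C := hC
  ext i j
  · simp [decompM_apply]
  · have h1 := congrArg Prod.snd (congrFun (congrFun hC' i) j)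
    simp [ctrans, conjA] at h1
    simp [decompM_apply, h1]

theorem decompM_det (C : Matrix (Fin 2) (Fin 2) ℝ) : (decompM C).det = toA C.det := by
  rw [Matrix.det_fin_two, Matrix.det_fin_two]
  ext <;> simp [decompM_apply, toA] <;> ring

theorem toA_eq_one (t : ℝ) : toA t = 1 ↔ t = 1 := by
  simp [toA, Prod.ext_iff]

/-- Every `C ∈ Herm₂(𝒜)` can be written uniquely as
`C = ((1+σ)/2)·C₁ + ((1-σ)/2)·C₁ᵗ` with `C₁ ∈ M₂(ℝ)`, and `det C = det C₁`; consequently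
`C₁ ↦ C` is a bijection `M₂(ℝ) → Herm₂(𝒜)` restricting to a bijection from `SL₂(ℝ)` onto
`{C ∈ Herm₂(𝒜) : det C = 1}`. -/
theorem stmt9 :
    (∀ C ∈ Herm2, ∃! C₁ : Matrix (Fin 2) (Fin 2) ℝ, C = decompM C₁) ∧
    (∀ C₁ : Matrix (Fin 2) (Fin 2) ℝ, (decompM C₁).det = toA C₁.det) ∧
    Set.BijOn decompM Set.univ Herm2 ∧
    Set.BijOn decompM {C₁ : Matrix (Fin 2) (Fin 2) ℝ | C₁.det = 1}
      {C : M2A | C ∈ Herm2 ∧ C.det = 1} := by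
  refine ⟨fun C hC => ⟨C.map Prod.fst, (decompM_surj C hC).symm, fun D hD => ?_⟩, decompM_det,
    ⟨fun C _ => decompM_mem C, decompM_inj.injOn, fun C hC => ⟨_, trivial, decompM_surj C hC⟩⟩,
    ⟨fun C hC => ⟨decompM_mem C, ?_⟩, decompM_inj.injOn,
      fun C hC => ⟨_, ?_, decompM_surj C hC.1⟩⟩⟩
  · exact decompM_inj (hD.symm.trans (decompM_surj C hC).symm)
  · rw [decompM_det, toA_eq_one]
    exact hC
  · show (C.map Prod.fst).det = 1
    rw [← toA_eq_one, ← decompM_det, decompM_surj C hC.1]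
    exact hC.2
end
end

section
/- Let φ, ψ : ℝ² → 𝒜 and p, q : ℝ² → ℝ be C¹ maps satisfying the Dirac-type system ∂_a φ = −p·ψ and ∂_â ψ = −q·φ. Then ∂_a(ψ̂·φ) = ∂_â(ψ·φ̂). (This is the closedness condition ensuring that the 1-forms in the generalized Weierstrass representation have path-independent integrals.) -/
noncomputable section

/-- If `φ, ψ : ℝ² → 𝒜` and `p, q : ℝ² → ℝ` are `C¹` and satisfy the
Dirac-type system `∂_a φ = -p·ψ`, `∂_â ψ = -q·φ`, then `∂_a (ψ̂·φ) = ∂_â (ψ·φ̂)`. -/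
theorem stmt11 (φ ψ : ℝ × ℝ → LorentzA) (p q : ℝ × ℝ → ℝ)
    (hφ : ContDiff ℝ 1 φ) (hψ : ContDiff ℝ 1 ψ)
    (hp : ContDiff ℝ 1 p) (hq : ContDiff ℝ 1 q)
    (hD1 : ∀ x, Da φ x = -toA (p x) * ψ x)
    (hD2 : ∀ x, Dahat ψ x = -toA (q x) * φ x) :
    ∀ x, Da (fun y => conjA (ψ y) * φ y) x = Dahat (fun y => ψ y * conjA (φ y)) x := by
  intro x
  have hφx := (hφ.differentiable one_ne_zero x).hasFDerivAt
  have hψx := (hψ.differentiable one_ne_zero x).hasFDerivAt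
  have hcφ : HasFDerivAt (fun y => conjA (φ y)) _ x := hφx.snd.prodMk hφx.fst
  have hcψ : HasFDerivAt (fun y => conjA (ψ y)) _ x := hψx.snd.prodMk hψx.fst
  have h1 := (hcψ.mul hφx).fderiv
  have h2 := (hψx.mul hcφ).fderiv
  have e1 := hD1 x
  have e2 := hD2 x
  change fderiv ℝ (fun y => conjA (ψ y) * φ y) x = _ at h1
  change fderiv ℝ (fun y => ψ y * conjA (φ y)) x = _ at h2
  simp only [Da, Dahat, duA, dvA] at e1 e2 ⊢
  rw [h1, h2]
  have a1 := congrArg Prod.fst e1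
  have a2 := congrArg Prod.snd e1
  have b1 := congrArg Prod.fst e2
  have b2 := congrArg Prod.snd e2
  simp [sA, toA] at a1 a2 b1 b2
  ext
  · simp [sA, conjA]
    linear_combination (ψ x).2 * a1 + (φ x).1 * b2 - (φ x).2 * b1 - (ψ x).1 * a2
  · simp [sA, conjA]
    linear_combination (ψ x).1 * a2 + (φ x).2 * b1 - (φ x).1 * b2 - (ψ x).2 * a1
end
end

section
/- Let φ₁, φ₂, ψ₁, ψ₂ : ℝ² → 𝒜 and p, q : ℝ² → ℝ be smooth with ∂_a φ_α = −p·ψ_α and ∂_â ψ_α = −q·φ_α for α = 1, 2. Let F = (F₀, F₁, F₂, F₃) : ℝ² → ℝ⁴ be C¹ such that at every point, for every X = (X₁, X₂) ∈ ℝ², setting z := X₁ + σX₂ ∈ 𝒜: d(F₀+F₁)(X) = −(ψ₁φ̂₁·z + ψ̂₁φ₁·ẑ), d(F₀−F₁)(X) = ψ₂φ̂₂·z + ψ̂₂φ₂·ẑ, dF₂(X) + σ·dF₃(X) = ψ₁φ̂₂·z + ψ̂₂φ₁·ẑ, and dF₂(X) − σ·dF₃(X) = ψ₂φ̂₁·z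 + ψ̂₁φ₂·ẑ. Then ⟨∂_u F, ∂_v F⟩ = 0 and −⟨∂_u F, ∂_u F⟩ = ⟨∂_v F, ∂_v F⟩ = |ψ₂φ₁ − ψ₁φ₂|². In particular, wherever |ψ₂φ₁ − ψ₁φ₂|² ≠ 0, F is a conformal immersion of a Lorentz surface into ℝ^{2,2} with induced metric g = −|ψ₂φ₁ − ψ₁φ₂|²·da·dâ = |ψ₂φ₁ − ψ₁φ₂|²(−du² + dv²). -/
noncomputable section

/-- Generalized Weierstrass representation in `ℝ^{2,2}`: given smooth
solutions of the Dirac system `∂_a φ_α = -p·ψ_α`, `∂_â ψ_α = -q·φ_α` (`α = 1,2`) and a `C¹`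
map `F = (F₀,F₁,F₂,F₃) : ℝ² → ℝ⁴` whose differential is prescribed by the Weierstrass
integrands, `F` satisfies the conformality relations `⟨∂_u F, ∂_v F⟩ = 0` and
`-⟨∂_u F, ∂_u F⟩ = ⟨∂_v F, ∂_v F⟩ = |ψ₂φ₁ - ψ₁φ₂|²` (for the signature-(2,2) product),
and wherever `|ψ₂φ₁ - ψ₁φ₂|² ≠ 0` its differential is injective, i.e. `F` is a conformal
immersion with induced metric `|ψ₂φ₁ - ψ₁φ₂|²(-du² + dv²)`. -/
theorem stmt12 (φ₁ φ₂ ψ₁ ψ₂ : ℝ × ℝ → LorentzA) (p q : ℝ × ℝ → ℝ)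
    (F₀ F₁ F₂ F₃ : ℝ × ℝ → ℝ)
    (hφ₁ : ContDiff ℝ (⊤ : ℕ∞) φ₁) (hφ₂ : ContDiff ℝ (⊤ : ℕ∞) φ₂)
    (hψ₁ : ContDiff ℝ (⊤ : ℕ∞) ψ₁) (hψ₂ : ContDiff ℝ (⊤ : ℕ∞) ψ₂)
    (hp : ContDiff ℝ (⊤ : ℕ∞) p) (hq : ContDiff ℝ (⊤ : ℕ∞) q)
    (hF₀ : ContDiff ℝ 1 F₀) (hF₁ : ContDiff ℝ 1 F₁)
    (hF₂ : ContDiff ℝ 1 F₂) (hF₃ : ContDiff ℝ 1 F₃)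
    (hD1 : ∀ x, Da φ₁ x = -toA (p x) * ψ₁ x) (hD2 : ∀ x, Da φ₂ x = -toA (p x) * ψ₂ x)
    (hD3 : ∀ x, Dahat ψ₁ x = -toA (q x) * φ₁ x) (hD4 : ∀ x, Dahat ψ₂ x = -toA (q x) * φ₂ x)
    (hW1 : ∀ x X : ℝ × ℝ, toA (fderiv ℝ (fun y => F₀ y + F₁ y) x X) =
      -(ψ₁ x * conjA (φ₁ x) * mkA X.1 X.2 + conjA (ψ₁ x) * φ₁ x * conjA (mkA X.1 X.2)))
    (hW2 : ∀ x X : ℝ × ℝ, toA (fderiv ℝ (fun y => F₀ y - F₁ y) x X) =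
      ψ₂ x * conjA (φ₂ x) * mkA X.1 X.2 + conjA (ψ₂ x) * φ₂ x * conjA (mkA X.1 X.2))
    (hW3 : ∀ x X : ℝ × ℝ, toA (fderiv ℝ F₂ x X) + sA * toA (fderiv ℝ F₃ x X) =
      ψ₁ x * conjA (φ₂ x) * mkA X.1 X.2 + conjA (ψ₂ x) * φ₁ x * conjA (mkA X.1 X.2))
    (hW4 : ∀ x X : ℝ × ℝ, toA (fderiv ℝ F₂ x X) - sA * toA (fderiv ℝ F₃ x X) =
      ψ₂ x * conjA (φ₁ x) * mkA X.1 X.2 + conjA (ψ₁ x) * φ₂ x * conjA (mkA X.1 X.2)) :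
    ∀ x : ℝ × ℝ,
      (-(duR F₀ x * dvR F₀ x) + duR F₁ x * dvR F₁ x - duR F₂ x * dvR F₂ x +
        duR F₃ x * dvR F₃ x = 0) ∧
      (-(-(duR F₀ x) ^ 2 + (duR F₁ x) ^ 2 - (duR F₂ x) ^ 2 + (duR F₃ x) ^ 2) =
        nsqA (ψ₂ x * φ₁ x - ψ₁ x * φ₂ x)) ∧
      (-(dvR F₀ x) ^ 2 + (dvR F₁ x) ^ 2 - (dvR F₂ x) ^ 2 + (dvR F₃ x) ^ 2 =
        nsqA (ψ₂ x * φ₁ x - ψ₁ x * φ₂ x)) ∧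
      (nsqA (ψ₂ x * φ₁ x - ψ₁ x * φ₂ x) ≠ 0 →
        Function.Injective fun X : ℝ × ℝ =>
          (fderiv ℝ F₀ x X, fderiv ℝ F₁ x X, fderiv ℝ F₂ x X, fderiv ℝ F₃ x X)) := by
  intro x
  have d0 : DifferentiableAt ℝ F₀ x := hF₀.differentiable (by norm_num) x
  have d1 : DifferentiableAt ℝ F₁ x := hF₁.differentiable (by norm_num) x
  have key : ∀ X : ℝ × ℝ,
      (fderiv ℝ F₀ x X + fderiv ℝ F₁ x X =
        -((ψ₁ x).1 * (φ₁ x).2 * (X.1 + X.2) + (ψ₁ x).2 * (φ₁ x).1 * (X.1 - X.2))) ∧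
      (fderiv ℝ F₀ x X - fderiv ℝ F₁ x X =
        (ψ₂ x).1 * (φ₂ x).2 * (X.1 + X.2) + (ψ₂ x).2 * (φ₂ x).1 * (X.1 - X.2)) ∧
      (fderiv ℝ F₂ x X + fderiv ℝ F₃ x X =
        (ψ₁ x).1 * (φ₂ x).2 * (X.1 + X.2) + (ψ₂ x).2 * (φ₁ x).1 * (X.1 - X.2)) ∧
      (fderiv ℝ F₂ x X - fderiv ℝ F₃ x X =
        (ψ₂ x).1 * (φ₁ x).2 * (X.1 + X.2) + (ψ₁ x).2 * (φ₂ x).1 * (X.1 - X.2)) := by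
    intro X
    have e1 : fderiv ℝ (fun y => F₀ y + F₁ y) x X = fderiv ℝ F₀ x X + fderiv ℝ F₁ x X := by
      rw [fderiv_fun_add d0 d1]; rfl
    have e2 : fderiv ℝ (fun y => F₀ y - F₁ y) x X = fderiv ℝ F₀ x X - fderiv ℝ F₁ x X := by
      rw [fderiv_fun_sub d0 d1]; rfl
    have h1 := congrArg Prod.fst (hW1 x X)
    have h2 := congrArg Prod.fst (hW2 x X)
    have h3 := congrArg Prod.fst (hW3 x X)
    have h4 := congrArg Prod.fst (hW4 x X)
    rw [e1] at h1
    rw [e2] at h2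
    simp only [toA, conjA, mkA, sA, Prod.fst_add, Prod.fst_sub, Prod.fst_mul, Prod.fst_neg,
      one_mul] at h1 h2 h3 h4
    exact ⟨h1, h2, h3, h4⟩
  obtain ⟨u1, u2, u3, u4⟩ := key (1, 0)
  obtain ⟨v1, v2, v3, v4⟩ := key (0, 1)
  have solve : ∀ {s t a b : ℝ}, s + t = a → s - t = b → s = (a + b) / 2 ∧ t = (a - b) / 2 := by
    intro s t a b h h'
    constructor <;> linarith
  obtain ⟨U0, U1⟩ := solve u1 u2
  obtain ⟨U2, U3⟩ := solve u3 u4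
  obtain ⟨V0, V1⟩ := solve v1 v2
  obtain ⟨V2, V3⟩ := solve v3 v4
  refine ⟨?_, ?_, ?_, ?_⟩
  · simp only [duR, dvR]
    rw [U0, U1, U2, U3, V0, V1, V2, V3]
    ring
  · simp only [duR, nsqA, Prod.fst_sub, Prod.snd_sub, Prod.fst_mul, Prod.snd_mul]
    rw [U0, U1, U2, U3]
    ring
  · simp only [dvR, nsqA, Prod.fst_sub, Prod.snd_sub, Prod.fst_mul, Prod.snd_mul]
    rw [V0, V1, V2, V3]
    ring
  · intro hN X Y hXY
    simp only [nsqA, Prod.fst_sub, Prod.snd_sub, Prod.fst_mul, Prod.snd_mul] at hN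
    simp only [Prod.mk.injEq] at hXY
    obtain ⟨q0, q1, q2, q3⟩ := hXY
    obtain ⟨x1, x2, x3, x4⟩ := key X
    obtain ⟨y1, y2, y3, y4⟩ := key Y
    rw [q0, q1, y1] at x1
    rw [q0, q1, y2] at x2
    rw [q2, q3, y3] at x3
    rw [q2, q3, y4] at x4
    have hs : (X.1 + X.2) - (Y.1 + Y.2) = 0 := by
      apply (mul_eq_zero.mp _).resolve_left hN
      linear_combination (-(ψ₂ x).2 * (φ₂ x).1) * x1 + ((ψ₁ x).2 * (φ₁ x).1) * x2
        - ((ψ₁ x).2 * (φ₂ x).1) * x3 - ((ψ₂ x).2 * (φ₁ x).1) * x4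
    have ht : (X.1 - X.2) - (Y.1 - Y.2) = 0 := by
      apply (mul_eq_zero.mp _).resolve_left hN
      linear_combination (-(ψ₂ x).1 * (φ₂ x).2) * x1 + ((ψ₁ x).1 * (φ₁ x).2) * x2
        - ((ψ₂ x).1 * (φ₁ x).2) * x3 - ((ψ₁ x).1 * (φ₂ x).2) * x4
    ext <;> linarith
end
end
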